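/- Let q and n be coprime positive integers with q ≥ 2. Let N be the set of cyclic necklaces of length n with at most q colors, i.e. the set of orbits of functions {1,…,n} → {1,…,q} under the action of the cyclic group of order n by cyclic rotation of the domain, and let F be the set of all multisets of elements of ℤ/nℤ whose elements sum to 0 and in which every element has multiplicity strictly less than q. Then |N| = |F| = (1/n)·Σ_{e ∣ n} φ(e)·q^{n/e}, where the sum is over positive divisors e of n and φ is Euler's totient function. -/

import Mathlib

/-- Two colorings `f g : ℤ/nℤ → Fin q` give the same necklace iff one is a cyclic
rotation of the other. -/
def necklaceRel (n q : ℕ) (f g : ZMod n → Fin q) : Prop :=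
  ∃ r : ZMod n, ∀ i : ZMod n, f i = g (i + r)

open Finset

/-- Rotation of functions on an additive commutative group: `(r +ᵥ f) i = f (i + r)`. -/
abbrev rotationAction (G α : Type*) [AddCommGroup G] : AddAction G (G → α) where
  vadd r f i := f (i + r)
  zero_vadd f := funext fun i => congrArg f (add_zero i)
  add_vadd r s f := funext fun i => congrArg f (by abel)

/-- Functions invariant under translation by `r` are functions on the quotient by the subgroup
generated by `r`. -/
def invariantFunctionsEquiv {G : Type*} (α : Type*) [AddCommGroup G] (r : G) :
    {f : G → α // ∀ i, f (i + r) = f i} ≃ (G ⧸ AddSubgroup.zmultiples r → α) where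
  toFun f := Quotient.lift f.1 (by
    intro a b hab
    obtain ⟨k, hk⟩ := AddSubgroup.mem_zmultiples_iff.mp (QuotientAddGroup.leftRel_apply.mp hab)
    have hper : Function.Periodic f.1 r := f.2
    rw [← hper.zsmul k a, hk, add_neg_cancel_left])
  invFun g := ⟨fun i => g i, fun i =>
    congrArg g (QuotientAddGroup.mk_add_of_mem i (AddSubgroup.mem_zmultiples r))⟩
  left_inv f := rfl
  right_inv g := by ext x; induction x using QuotientAddGroup.induction_on; rfl

theorem card_mul_eq_zero (n : ℕ) [NeZero n] (r : ZMod n) :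
    #{a : ZMod n | r * a = 0} = n / addOrderOf r := by
  have hrange : (AddMonoidHom.mulLeft r).range = AddSubgroup.zmultiples r := by
    ext x
    simp only [AddMonoidHom.mem_range, AddMonoidHom.coe_mulLeft, AddSubgroup.mem_zmultiples_iff]
    constructor
    · rintro ⟨a, rfl⟩
      exact ⟨a.val, by simp [mul_comm]⟩
    · rintro ⟨k, rfl⟩
      exact ⟨k, by simp [mul_comm]⟩
  have h := (AddMonoidHom.mulLeft r).ker.card_mul_index
  rw [AddSubgroup.index_ker, hrange, Nat.card_zmultiples, Nat.card_zmod] at h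
  refine (Nat.div_eq_of_eq_mul_left (addOrderOf_pos r) ?_).symm
  have hker : Nat.card (AddMonoidHom.mulLeft r).ker = #{a : ZMod n | r * a = 0} := by
    rw [← Fintype.card_subtype, ← Nat.card_eq_fintype_card]
    rfl
  rw [← hker, h]

theorem card_quotient_zmultiples (n : ℕ) [NeZero n] (r : ZMod n) :
    Nat.card (ZMod n ⧸ AddSubgroup.zmultiples r) = n / addOrderOf r := by
  refine (Nat.div_eq_of_eq_mul_left (addOrderOf_pos r) ?_).symm
  rw [← Nat.card_zmultiples, ← AddSubgroup.card_eq_card_quotient_mul_card_addSubgroup,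
    Nat.card_zmod]

theorem sum_comp_addOrderOf (n : ℕ) [NeZero n] (f : ℕ → ℕ) :
    ∑ r : ZMod n, f (addOrderOf r) = ∑ e ∈ n.divisors, Nat.totient e * f e := by
  have hmaps : ∀ r ∈ (univ : Finset (ZMod n)), addOrderOf r ∈ n.divisors := fun r _ =>
    Nat.mem_divisors.mpr ⟨by simpa using addOrderOf_dvd_natCard r, NeZero.ne n⟩
  rw [← sum_fiberwise_of_maps_to hmaps]
  refine sum_congr rfl fun e he => ?_
  rw [sum_congr rfl (fun r hr => by rw [(mem_filter.mp hr).2]), sum_const,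
    IsAddCyclic.card_addOrderOf_eq_totient (by simpa using Nat.dvd_of_mem_divisors he), smul_eq_mul]

theorem card_necklaces_mul (n q : ℕ) [NeZero n] :
    n * Nat.card (Quot (necklaceRel n q)) = ∑ r : ZMod n, q ^ (n / addOrderOf r) := by
  classical
  let := rotationAction (ZMod n) (Fin q)
  have hrel : ∀ f g : ZMod n → Fin q,
      necklaceRel n q f g ↔ AddAction.orbitRel (ZMod n) (ZMod n → Fin q) f g := fun f g => by
    rw [AddAction.orbitRel_apply]
    exact exists_congr fun r => ⟨fun h => (funext h).symm, fun h i => (congrFun h i).symm⟩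
  have hburn := AddAction.sum_card_fixedBy_eq_card_orbits_mul_card_addGroup
    (ZMod n) (ZMod n → Fin q)
  rw [ZMod.card] at hburn
  rw [Nat.card_congr (Quot.congr (Equiv.refl _) hrel), mul_comm]
  refine (Eq.trans ?_ hburn.symm).trans (sum_congr rfl fun r _ => ?_)
  · rw [← Nat.card_eq_fintype_card]
    rfl
  · rw [← Nat.card_eq_fintype_card, ← card_quotient_zmultiples]
    have hfixed : ∀ f, f ∈ AddAction.fixedBy (ZMod n → Fin q) r ↔ ∀ i, f (i + r) = f i :=
      fun f => funext_iff
    rw [Nat.card_congr (Equiv.subtypeEquivRight hfixed),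
      Nat.card_congr (invariantFunctionsEquiv (Fin q) r), Nat.card_fun, Nat.card_fin]

theorem addChar_map_sum {ι A M : Type*} [AddCommMonoid A] [CommMonoid M] (ψ : AddChar A M)
    (s : Finset ι) (f : ι → A) : ψ (∑ i ∈ s, f i) = ∏ i ∈ s, ψ (f i) :=
  map_prod ψ.toMonoidHom (fun i => Multiplicative.ofAdd (f i)) s

theorem prod_sum_addChar_pow {n q : ℕ} [NeZero n] (hco : Nat.Coprime q n) (r : ZMod n) :
    ∏ a : ZMod n, ∑ j : Fin q, ZMod.stdAddChar (r * a) ^ (j : ℕ) =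
      (q : ℂ) ^ #{a : ZMod n | r * a = 0} := by
  rw [← prod_filter_mul_prod_filter_not univ (fun a : ZMod n => r * a = 0)]
  have hzero : ∏ a : ZMod n with r * a = 0, ∑ j : Fin q, ZMod.stdAddChar (r * a) ^ (j : ℕ) =
      (q : ℂ) ^ #{a : ZMod n | r * a = 0} :=
    prod_eq_pow_card fun a ha => by simp [(mem_filter.mp ha).2]
  have hne : ∀ a : ZMod n, ¬ r * a = 0 → (ZMod.stdAddChar (r * a) : ℂ) - 1 ≠ 0 := fun a ha h =>
    ha (ZMod.injective_stdAddChar (by rw [sub_eq_zero.mp h, AddChar.map_zero_eq_one]))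
  have hunit : IsUnit (q : ZMod n) := (ZMod.isUnit_iff_coprime q n).mpr hco
  have hprod : ∏ a : ZMod n with ¬ r * a = 0, ((ZMod.stdAddChar (r * a) : ℂ) ^ q - 1) =
      ∏ a : ZMod n with ¬ r * a = 0, ((ZMod.stdAddChar (r * a) : ℂ) - 1) := by
    refine prod_equiv hunit.unit.mulLeft (fun a => ?_) fun a _ => ?_
    · simp [mul_left_comm r, hunit.mul_right_eq_zero]
    · rw [← AddChar.map_nsmul_eq_pow]
      simp [mul_left_comm r]
  have hone : ∏ a : ZMod n with ¬ r * a = 0,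
      ∑ j : Fin q, (ZMod.stdAddChar (r * a) : ℂ) ^ (j : ℕ) = 1 := by
    have hprod_ne : ∏ a : ZMod n with ¬ r * a = 0, ((ZMod.stdAddChar (r * a) : ℂ) - 1) ≠ 0 :=
      prod_ne_zero_iff.mpr fun a ha => hne a (mem_filter.mp ha).2
    refine mul_right_cancel₀ hprod_ne ?_
    rw [one_mul, ← prod_mul_distrib, ← hprod]
    refine prod_congr rfl fun a _ => ?_
    rw [Fin.sum_univ_eq_sum_range (fun j => (ZMod.stdAddChar (r * a) : ℂ) ^ j), geom_sum_mul]
  rw [hzero, hone, mul_one]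

theorem card_zero_sum_functions_mul {n q : ℕ} [NeZero n] (hco : Nat.Coprime q n) :
    n * #{c : ZMod n → Fin q | ∑ a, (c a : ℕ) • a = 0} =
      ∑ r : ZMod n, q ^ #{a : ZMod n | r * a = 0} := by
  have hsum : ∀ c : ZMod n → Fin q,
      ∑ r : ZMod n, (ZMod.stdAddChar (r * ∑ a, (c a : ℕ) • a) : ℂ) =
        if ∑ a, (c a : ℕ) • a = 0 then (n : ℂ) else 0 := fun c => by
    rw [AddChar.sum_mulShift _ (ZMod.isPrimitive_stdAddChar n), ZMod.card]
    split_ifs <;> simp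
  have hprod : ∀ (r : ZMod n) (c : ZMod n → Fin q),
      (ZMod.stdAddChar (r * ∑ a, (c a : ℕ) • a) : ℂ) =
        ∏ a, ZMod.stdAddChar (r * a) ^ (c a : ℕ) := fun r c => by
    rw [mul_sum, addChar_map_sum]
    exact prod_congr rfl fun a _ => by rw [mul_smul_comm, AddChar.map_nsmul_eq_pow]
  have key : (n : ℂ) * #{c : ZMod n → Fin q | ∑ a, (c a : ℕ) • a = 0} =
      ∑ r : ZMod n, (q : ℂ) ^ #{a : ZMod n | r * a = 0} := by
    calc (n : ℂ) * #{c : ZMod n → Fin q | ∑ a, (c a : ℕ) • a = 0}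
        = ∑ c : ZMod n → Fin q, ∑ r : ZMod n,
            (ZMod.stdAddChar (r * ∑ a, (c a : ℕ) • a) : ℂ) := by
          rw [sum_congr rfl fun c _ => hsum c, ← sum_filter, sum_const, nsmul_eq_mul, mul_comm]
      _ = ∑ r : ZMod n, (q : ℂ) ^ #{a : ZMod n | r * a = 0} := by
          rw [sum_comm]
          refine sum_congr rfl fun r _ => ?_
          rw [← prod_sum_addChar_pow hco, prod_univ_sum, Fintype.piFinset_univ]
          exact sum_congr rfl fun c _ => hprod r c
  exact_mod_cast key

/-- A multiset over a finite type with all multiplicities less than `q` is the same thing as its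
multiplicity function. -/
def boundedMultisetEquiv (α : Type*) [Fintype α] [DecidableEq α] (q : ℕ) :
    {m : Multiset α // ∀ a, m.count a < q} ≃ (α → Fin q) where
  toFun m a := ⟨m.1.count a, m.2 a⟩
  invFun c := ⟨∑ a, (c a : ℕ) • {a}, fun a => by
    simp [Multiset.count_sum', Multiset.count_singleton]⟩
  left_inv m := Subtype.ext <| Multiset.ext' fun a => by
    simp [Multiset.count_sum', Multiset.count_singleton]
  right_inv c := funext fun a => Fin.ext <| by
    simp [Multiset.count_sum', Multiset.count_singleton]

theorem ncard_zero_sum_multisets (n q : ℕ) [NeZero n] :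
    Set.ncard {m : Multiset (ZMod n) | m.sum = 0 ∧ ∀ a : ZMod n, m.count a < q} =
      #{c : ZMod n → Fin q | ∑ a, (c a : ℕ) • a = 0} := by
  rw [← Set.ncard_coe_finset]
  refine Set.ncard_congr (fun m hm => boundedMultisetEquiv (ZMod n) q ⟨m, hm.2⟩) ?_ ?_ ?_
  · rintro m ⟨h0, hm⟩
    rw [Finset.sum_multiset_count_of_subset m univ (subset_univ _)] at h0
    simpa [boundedMultisetEquiv] using h0
  · intro m m' hm hm' h
    exact congrArg Subtype.val ((boundedMultisetEquiv (ZMod n) q).injective h)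
  · intro c hc
    refine ⟨_, ⟨?_, ((boundedMultisetEquiv (ZMod n) q).symm c).2⟩, Equiv.apply_symm_apply _ c⟩
    simpa [boundedMultisetEquiv, Multiset.sum_sum, Multiset.sum_nsmul] using hc

/-- **Necklaces and zero-sum multisets are equinumerous.**  For coprime `q ≥ 2` and
`n ≥ 1`, the number of cyclic necklaces of length `n` with at most `q` colors equals the
number of multisets over `ℤ/nℤ` with zero sum and every multiplicity strictly less than
`q`, and `n` times this common value is `Σ_{e ∣ n} φ(e)·q^{n/e}`. -/
theorem necklaces_eq_zero_sum_multisets (n q : ℕ) [NeZero n] (hn : 1 ≤ n) (hq : 2 ≤ q)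
    (hco : Nat.Coprime q n) :
    Nat.card (Quot (necklaceRel n q)) =
      Set.ncard {m : Multiset (ZMod n) | m.sum = 0 ∧ ∀ a : ZMod n, m.count a < q} ∧
    n * Set.ncard {m : Multiset (ZMod n) | m.sum = 0 ∧ ∀ a : ZMod n, m.count a < q} =
      ∑ e ∈ n.divisors, Nat.totient e * q ^ (n / e) := by
  have hmul : n * Set.ncard {m : Multiset (ZMod n) | m.sum = 0 ∧ ∀ a : ZMod n, m.count a < q} =
      ∑ r : ZMod n, q ^ (n / addOrderOf r) := by
    rw [ncard_zero_sum_multisets, card_zero_sum_functions_mul hco]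
    exact sum_congr rfl fun r _ => by rw [card_mul_eq_zero]
  refine ⟨Nat.eq_of_mul_eq_mul_left hn ?_, ?_⟩
  · rw [card_necklaces_mul, hmul]
  · rw [hmul, sum_comp_addOrderOf n fun e => q ^ (n / e)]
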